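/- Let F : E → E be monotone and locally Lipschitz, g : E → ℝ convex, α ∈ (0, √2 − 1), λ_max > 0, and assume VI(F, g) has at least one solution. Let (x_n)_{n≥0}, (y_n)_{n≥0} be sequences in E and (λ_n)_{n≥0}, (θ_n)_{n≥1} positive reals with θ_0 := 1 such that for all n ≥ 1: 0 < λ_n ≤ λ_max, λ_n = θ_n·λ_{n−1}, θ_n² ≤ 1 + θ_{n−1}, y_n = x_n + θ_n·(x_n − x_{n−1}), λ_n·‖F(y_n) − F(y_{n−1})‖ ≤ α·‖y_n − y_{n−1}‖, and for all n ≥ 0, x_{n+1} is the minimizer over E of z ↦ λ_n·g(z) + (1/2)·‖z − (x_n − λ_n·F(y_n))‖². Assume moreover that limsup λ_n > 0. Then (x_n) and (y_n) converge to a point x* ∈ E that solves VI(F, g). -/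

import Mathlib

open scoped RealInnerProductSpace

lemma aux_prox {E : Type*} [NormedAddCommGroup E] [InnerProductSpace ℝ E]
    (g : E → ℝ) (hg : ConvexOn ℝ Set.univ g) (l : ℝ) (hl : 0 < l) (p w : E)
    (h : ∀ z : E, l * g p + (1 / 2) * ‖p - w‖ ^ 2 ≤ l * g z + (1 / 2) * ‖z - w‖ ^ 2) (z : E) :
    l * (g p - g z) ≤ ⟪p - w, z - p⟫ := by
  have key : ∀ t : ℝ, 0 < t → t ≤ 1 →
      l * (g p - g z) ≤ ⟪p - w, z - p⟫ + t / 2 * ‖z - p‖ ^ 2 := by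
    intro t ht ht1
    have h1 := h ((1 - t) • p + t • z)
    have h2 := hg.2 (Set.mem_univ p) (Set.mem_univ z) (by linarith : (0:ℝ) ≤ 1 - t) ht.le (by ring)
    have e : (1 - t) • p + t • z - w = (p - w) + t • (z - p) := by module
    rw [e, norm_add_sq_real, inner_smul_right, norm_smul, mul_pow, Real.norm_eq_abs, sq_abs] at h1
    simp only [smul_eq_mul] at h2
    have h3 := mul_le_mul_of_nonneg_left h2 hl.le
    refine le_of_mul_le_mul_left ?_ ht
    nlinarith
  refine le_of_forall_pos_le_add fun ε hε => ?_
  have hN : 0 < ‖z - p‖ ^ 2 + 1 := by positivity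
  have hm : 0 < min 1 (ε / (‖z - p‖ ^ 2 + 1)) := lt_min one_pos (by positivity)
  have := key _ hm (min_le_left _ _)
  have h4 : min 1 (ε / (‖z - p‖ ^ 2 + 1)) * (‖z - p‖ ^ 2 + 1) ≤ ε := by
    rw [← le_div_iff₀ hN]; exact min_le_right _ _
  nlinarith [sq_nonneg ‖z - p‖]

lemma aux_step1 {E : Type*} [NormedAddCommGroup E] [InnerProductSpace ℝ E]
    (x0 x1 x2 y1 xs u0 u1 us : E) (g0 g1 g2 gs l θ : ℝ) (hl : 0 < l) (hθ : 0 < θ)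
    (hy : y1 = x1 + θ • (x1 - x0))
    (h1 : l * (g1 - g2) ≤ ⟪x1 - (x0 - l • u0), x2 - x1⟫)
    (h2 : l * (g1 - g0) ≤ ⟪x1 - (x0 - l • u0), x0 - x1⟫)
    (h3 : θ * l * (g2 - gs) ≤ ⟪x2 - (x1 - (θ * l) • u1), xs - x2⟫)
    (hm : 0 ≤ ⟪u1 - us, y1 - xs⟫) :
    ‖x2 - xs‖ ^ 2 ≤ ‖x1 - xs‖ ^ 2 - ‖y1 - x1‖ ^ 2 - ‖x2 - y1‖ ^ 2
      + 2 * (θ * l) * ⟪u1 - u0, y1 - x2⟫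
      - 2 * (θ * l) * ((1 + θ) * (⟪us, x1 - xs⟫ + g1 - gs) - θ * (⟪us, x0 - xs⟫ + g0 - gs)) := by
  have k1 := mul_le_mul_of_nonneg_left h1 hθ.le
  have k2 := mul_le_mul_of_nonneg_left h2 (sq_nonneg θ)
  have k4 := mul_nonneg (mul_pos hθ hl).le hm
  subst hy
  simp only [← real_inner_self_eq_norm_sq, inner_add_left, inner_add_right, inner_sub_left,
    inner_sub_right, real_inner_smul_left, real_inner_smul_right] at *
  simp only [real_inner_comm x0 x1, real_inner_comm x0 x2, real_inner_comm x1 x2,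
    real_inner_comm xs x0, real_inner_comm xs x1, real_inner_comm xs x2] at *
  linarith

lemma aux_step2 {E : Type*} [NormedAddCommGroup E] [InnerProductSpace ℝ E]
    (x1 x2 y0 y1 u0 u1 : E) (α L : ℝ) (hα : 0 < α) (hL : 0 < L)
    (h : L * ‖u1 - u0‖ ≤ α * ‖y1 - y0‖) :
    2 * L * ⟪u1 - u0, y1 - x2⟫ ≤ α * (1 + √2) * ‖y1 - x1‖ ^ 2 + α * √2 * ‖x2 - y1‖ ^ 2
      + α * ‖x1 - y0‖ ^ 2 := by
  have c := real_inner_le_norm (u1 - u0) (y1 - x2)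
  rw [norm_sub_rev y1 x2] at c
  have t : ‖y1 - y0‖ ≤ ‖y1 - x1‖ + ‖x1 - y0‖ := by
    simpa using norm_add_le (y1 - x1) (x1 - y0)
  set b := ‖x2 - y1‖
  set p := ‖y1 - x1‖
  set q := ‖x1 - y0‖
  have hb : 0 ≤ b := norm_nonneg _
  have s : √2 ^ 2 = 2 := Real.sq_sqrt (by norm_num)
  have s0 : 0 ≤ √2 := Real.sqrt_nonneg _
  have i1 : L * ⟪u1 - u0, y1 - x2⟫ ≤ α * ((p + q) * b) := by
    calc L * ⟪u1 - u0, y1 - x2⟫ ≤ L * (‖u1 - u0‖ * b) := mul_le_mul_of_nonneg_left c hL.le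
      _ = (L * ‖u1 - u0‖) * b := by ring
      _ ≤ (α * ‖y1 - y0‖) * b := mul_le_mul_of_nonneg_right h hb
      _ ≤ (α * (p + q)) * b := by gcongr
      _ = _ := by ring
  have i2 : 2 * ((p + q) * b) ≤ (1 + √2) * p ^ 2 + √2 * b ^ 2 + q ^ 2 := by
    have e : (1 + √2) * p ^ 2 + √2 * b ^ 2 + q ^ 2 - 2 * ((p + q) * b)
      = (1 + √2) * (p - (√2 - 1) * b) ^ 2 + (q - b) ^ 2 := by
      linear_combination (-(√2 * b ^ 2) + b ^ 2 + 2 * p * b) * s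
    have : 0 ≤ (1 + √2) * (p - (√2 - 1) * b) ^ 2 + (q - b) ^ 2 := by positivity
    linarith
  nlinarith [mul_le_mul_of_nonneg_left i2 hα.le]

open Filter Topology in
/-- Convergence of Algorithm 2 (Theorem 2.11 of the paper). -/
theorem alg2_converges
    {E : Type*} [NormedAddCommGroup E] [InnerProductSpace ℝ E] [FiniteDimensional ℝ E]
    (F : E → E) (hFmono : ∀ x y : E, 0 ≤ ⟪F x - F y, x - y⟫) (hFlip : LocallyLipschitz F)
    (g : E → ℝ) (hg : ConvexOn ℝ Set.univ g)
    (α : ℝ) (hα : α ∈ Set.Ioo 0 (Real.sqrt 2 - 1))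
    (lamMax : ℝ) (hmax : 0 < lamMax)
    (hsol : ∃ xs : E, ∀ z : E, 0 ≤ ⟪F xs, z - xs⟫ + g z - g xs)
    (x y : ℕ → E) (lam θ : ℕ → ℝ)
    (hlampos : ∀ n, 0 < lam n) (hθ0 : θ 0 = 1) (hθpos : ∀ n, 1 ≤ n → 0 < θ n)
    (hlammax : ∀ n, 1 ≤ n → lam n ≤ lamMax)
    (hlamrec : ∀ n, 1 ≤ n → lam n = θ n * lam (n - 1))
    (hθrec : ∀ n, 1 ≤ n → θ n ^ 2 ≤ 1 + θ (n - 1))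
    (hy : ∀ n, 1 ≤ n → y n = x n + θ n • (x n - x (n - 1)))
    (hls : ∀ n, 1 ≤ n → lam n * ‖F (y n) - F (y (n - 1))‖ ≤ α * ‖y n - y (n - 1)‖)
    (hprox : ∀ n : ℕ, ∀ z : E,
      lam n * g (x (n + 1)) + (1 / 2) * ‖x (n + 1) - (x n - lam n • F (y n))‖ ^ 2 ≤
        lam n * g z + (1 / 2) * ‖z - (x n - lam n • F (y n))‖ ^ 2)
    (hlimsup : 0 < Filter.limsup lam Filter.atTop) :
    ∃ xs : E, (∀ z : E, 0 ≤ ⟪F xs, z - xs⟫ + g z - g xs) ∧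
      Filter.Tendsto x Filter.atTop (nhds xs) ∧
      Filter.Tendsto y Filter.atTop (nhds xs) := by
  obtain ⟨hα0, hα1⟩ := hα
  have hs2 : √2 ^ 2 = 2 := Real.sq_sqrt (by norm_num)
  have hs0 : 0 ≤ √2 := Real.sqrt_nonneg _
  obtain ⟨κ, hκdef⟩ : ∃ κ, κ = 1 - α * (1 + √2) := ⟨_, rfl⟩
  have hκ : 0 < κ := by nlinarith
  have hP : ∀ n z, lam n * (g (x (n + 1)) - g z) ≤
      ⟪x (n + 1) - (x n - lam n • F (y n)), z - x (n + 1)⟫ := fun n z =>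
    aux_prox g hg (lam n) (hlampos n) _ _ (hprox n) z
  have hFc : Continuous F := hFlip.continuous
  have hgc : Continuous g := by
    rw [← continuousOn_univ]
    exact hg.continuousOn isOpen_univ
  have hθp : ∀ n, 0 < θ n := by
    intro n
    rcases Nat.eq_zero_or_pos n with h | h
    · rw [h, hθ0]; exact one_pos
    · exact hθpos n h
  have hθ2 : ∀ n, θ n ≤ 2 := by
    intro n
    induction n with
    | zero => rw [hθ0]; norm_num
    | succ n ih =>
      have := hθrec (n + 1) (by omega)
      simp only [Nat.add_sub_cancel] at this
      nlinarith [hθp (n + 1)]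
  -- energy
  let A : E → ℕ → ℝ := fun xs n => ‖x (n + 1) - xs‖ ^ 2 + α * ‖x (n + 1) - y n‖ ^ 2
    + 2 * (lam (n + 1) * θ (n + 1)) * (⟪F xs, x n - xs⟫ + g (x n) - g xs)
  have hcoef : ∀ n, lam (n + 1) * θ (n + 1) ≤ lam n * (1 + θ n) := by
    intro n
    have h1 := hθrec (n + 1) (by omega)
    have h2 := hlamrec (n + 1) (by omega)
    simp only [Nat.add_sub_cancel] at h1 h2
    rw [h2]
    nlinarith [hlampos n]
  have hA : ∀ xs : E, (∀ z : E, 0 ≤ ⟪F xs, z - xs⟫ + g z - g xs) → ∀ n,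
      A xs (n + 1) + κ * (‖x (n + 2) - y (n + 1)‖ ^ 2 + ‖y (n + 1) - x (n + 1)‖ ^ 2) ≤ A xs n := by
    intro xs hxs n
    have e := hlamrec (n + 1) (by omega)
    have hyn := hy (n + 1) (by omega)
    have hl := hls (n + 1) (by omega)
    simp only [Nat.add_sub_cancel] at e hyn hl
    have h3 := hP (n + 1) xs
    rw [e] at h3
    have s1 := aux_step1 (x n) (x (n + 1)) (x (n + 2)) (y (n + 1)) xs (F (y n)) (F (y (n + 1)))
      (F xs) (g (x n)) (g (x (n + 1))) (g (x (n + 2))) (g xs) (lam n) (θ (n + 1)) (hlampos n)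
      (hθp _) hyn (hP n _) (hP n _) h3 (hFmono _ _)
    rw [← e] at s1
    have s2 := aux_step2 (x (n + 1)) (x (n + 2)) (y n) (y (n + 1)) (F (y n)) (F (y (n + 1))) α
      (lam (n + 1)) hα0 (hlampos _) hl
    have s3 := mul_le_mul_of_nonneg_right (hcoef (n + 1)) (hxs (x (n + 1)))
    simp only [A]
    rw [hκdef]
    linarith
  have hAnn : ∀ xs : E, (∀ z : E, 0 ≤ ⟪F xs, z - xs⟫ + g z - g xs) → ∀ n,
      ‖x (n + 1) - xs‖ ^ 2 ≤ A xs n := by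
    intro xs hxs n
    have := hxs (x n)
    have h1 : 0 ≤ 2 * (lam (n + 1) * θ (n + 1)) * (⟪F xs, x n - xs⟫ + g (x n) - g xs) :=
      mul_nonneg (by have := hlampos (n + 1); have := hθp (n + 1); positivity) this
    have h2 : 0 ≤ α * ‖x (n + 1) - y n‖ ^ 2 := by positivity
    simp only [A]
    linarith
  have hAanti : ∀ xs : E, (∀ z : E, 0 ≤ ⟪F xs, z - xs⟫ + g z - g xs) → Antitone (A xs) := by
    intro xs hxs
    refine antitone_nat_of_succ_le fun n => ?_
    have := hA xs hxs n
    have : 0 ≤ κ * (‖x (n + 2) - y (n + 1)‖ ^ 2 + ‖y (n + 1) - x (n + 1)‖ ^ 2) := by positivity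
    linarith
  obtain ⟨x0, hx0⟩ := hsol
  -- the residuals tend to zero
  have hres : Tendsto (fun n => ‖x (n + 2) - y (n + 1)‖ ^ 2 + ‖y (n + 1) - x (n + 1)‖ ^ 2)
      atTop (𝓝 0) := by
    have hbd : BddBelow (Set.range (A x0)) := by
      refine ⟨0, ?_⟩
      rintro _ ⟨n, rfl⟩
      exact (sq_nonneg _).trans (hAnn x0 hx0 n)
    have hlim := tendsto_atTop_ciInf (hAanti x0 hx0) hbd
    have hd : Tendsto (fun n => (A x0 n - A x0 (n + 1)) / κ) atTop (𝓝 0) := by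
      have := (hlim.sub (hlim.comp (tendsto_add_atTop_nat 1))).div_const κ
      simpa using this
    refine squeeze_zero (fun n => by positivity) (fun n => ?_) hd
    rw [le_div_iff₀ hκ]
    have := hA x0 hx0 n
    linarith
  have hsq : ∀ u : ℕ → E, Tendsto (fun n => ‖u n‖ ^ 2) atTop (𝓝 0) → Tendsto u atTop (𝓝 0) := by
    intro u hu
    rw [tendsto_zero_iff_norm_tendsto_zero]
    have := hu.sqrt
    simpa using this
  have hb : Tendsto (fun n => x (n + 1) - y n) atTop (𝓝 0) := by
    rw [← tendsto_add_atTop_iff_nat 1]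
    exact hsq _ (squeeze_zero (fun n => by positivity)
      (fun n => le_add_of_nonneg_right (by positivity)) hres)
  have hp : Tendsto (fun n => y n - x n) atTop (𝓝 0) := by
    rw [← tendsto_add_atTop_iff_nat 1]
    exact hsq _ (squeeze_zero (fun n => by positivity)
      (fun n => le_add_of_nonneg_left (by positivity)) hres)
  -- a subsequence with step sizes bounded below
  obtain ⟨c, hc0, hc⟩ := exists_between hlimsup
  have hfreq : ∃ᶠ n in atTop, c < lam n := by
    refine frequently_lt_of_lt_limsup ?_ hc
    exact IsBoundedUnder.isCoboundedUnder_le ⟨0, by simpa using ⟨0, fun n _ => (hlampos n).le⟩⟩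
  obtain ⟨φ, hφ, hφc⟩ := extraction_of_frequently_atTop hfreq
  obtain ⟨xb, -, ψ, hψ, hlimψ⟩ := tendsto_subseq_of_bounded
    (x := fun n => x (φ (n + 1))) (s := Metric.closedBall x0 (√(A x0 0)))
    Metric.isBounded_closedBall (by
      intro n
      have hpos : 1 ≤ φ (n + 1) := (Nat.le_add_left 1 n).trans hφ.le_apply
      obtain ⟨m, hm⟩ := Nat.exists_eq_add_of_le' hpos
      rw [mem_closedBall_iff_norm, hm]
      exact Real.le_sqrt_of_sq_le ((hAnn x0 hx0 m).trans (hAanti x0 hx0 (Nat.zero_le m))))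
  let σ : ℕ → ℕ := fun k => φ (ψ k + 1)
  have hσ : Tendsto σ atTop atTop :=
    hφ.tendsto_atTop.comp ((tendsto_add_atTop_nat 1).comp hψ.tendsto_atTop)
  have hσc : ∀ k, c < lam (σ k) := fun k => hφc _
  have hx1 : Tendsto (fun k => x (σ k)) atTop (𝓝 xb) := hlimψ
  have hy1 : Tendsto (fun k => y (σ k)) atTop (𝓝 xb) := by
    simpa using (hp.comp hσ).add hx1
  have hx2 : Tendsto (fun k => x (σ k + 1)) atTop (𝓝 xb) := by
    simpa using (hb.comp hσ).add hy1
  have hxb : ∀ z : E, 0 ≤ ⟪F xb, z - xb⟫ + g z - g xb := by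
    intro z
    have hlamI : ∀ k, ‖(lam (σ k))⁻¹‖ ≤ c⁻¹ := by
      intro k
      rw [Real.norm_of_nonneg (inv_nonneg.2 (hlampos _).le)]
      exact inv_anti₀ hc0 (hσc k).le
    have hdiff : Tendsto (fun k => x (σ k + 1) - x (σ k)) atTop (𝓝 0) := by
      simpa using hx2.sub hx1
    have ht0 : Tendsto (fun k => ⟪x (σ k + 1) - x (σ k), z - x (σ k + 1)⟫) atTop (𝓝 0) := by
      simpa using hdiff.inner (tendsto_const_nhds.sub hx2)
    have ht1 : Tendsto (fun k => (lam (σ k))⁻¹ * ⟪x (σ k + 1) - x (σ k), z - x (σ k + 1)⟫)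
        atTop (𝓝 0) := by
      refine squeeze_zero_norm (a := fun k => c⁻¹ * ‖⟪x (σ k + 1) - x (σ k), z - x (σ k + 1)⟫‖)
        (fun k => ?_) (by simpa using ht0.norm.const_mul c⁻¹)
      rw [norm_mul]
      exact mul_le_mul_of_nonneg_right (hlamI k) (norm_nonneg _)
    have ht2 : Tendsto (fun k => (lam (σ k))⁻¹ * ⟪x (σ k + 1) - x (σ k), z - x (σ k + 1)⟫
        + (⟪F (y (σ k)), z - x (σ k + 1)⟫ + g z - g (x (σ k + 1)))) atTop
        (𝓝 (0 + (⟪F xb, z - xb⟫ + g z - g xb))) :=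
      ht1.add (((((hFc.tendsto xb).comp hy1).inner (tendsto_const_nhds.sub hx2)).add_const _).sub
        ((hgc.tendsto xb).comp hx2))
    rw [zero_add] at ht2
    refine ge_of_tendsto' ht2 fun k => ?_
    have h := hP (σ k) z
    have e : x (σ k + 1) - (x (σ k) - lam (σ k) • F (y (σ k)))
      = (x (σ k + 1) - x (σ k)) + lam (σ k) • F (y (σ k)) := by abel
    rw [e, inner_add_left, real_inner_smul_left] at h
    have h' := mul_le_mul_of_nonneg_left h (inv_nonneg.2 (hlampos (σ k)).le)
    have hne := (hlampos (σ k)).ne'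
    rw [mul_add, inv_mul_cancel_left₀ hne, inv_mul_cancel_left₀ hne] at h'
    linarith
  -- energy tends to zero along the subsequence, hence everywhere
  have hAσ : Tendsto (fun k => A xb (σ k)) atTop (𝓝 0) := by
    have hΦ : Tendsto (fun k => ⟪F xb, x (σ k) - xb⟫ + g (x (σ k)) - g xb) atTop (𝓝 0) := by
      have := ((tendsto_const_nhds (x := F xb)).inner (hx1.sub_const xb)).add
        ((hgc.tendsto xb).comp hx1) |>.sub_const (g xb)
      simpa using this
    have hup : Tendsto (fun k => ‖x (σ k + 1) - xb‖ ^ 2 + α * ‖x (σ k + 1) - y (σ k)‖ ^ 2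
        + 2 * (lamMax * 2) * (⟪F xb, x (σ k) - xb⟫ + g (x (σ k)) - g xb)) atTop (𝓝 0) := by
      have := (((hx2.sub_const xb).norm.pow 2).add (((hb.comp hσ).norm.pow 2).const_mul α)).add
        (hΦ.const_mul (2 * (lamMax * 2)))
      simpa using this
    refine squeeze_zero (fun k => (sq_nonneg _).trans (hAnn xb hxb _)) (fun k => ?_) hup
    have h1 : lam (σ k + 1) * θ (σ k + 1) ≤ lamMax * 2 :=
      mul_le_mul (hlammax _ (by omega)) (hθ2 _) (hθp _).le hmax.le
    have h2 := mul_le_mul_of_nonneg_right h1 (hxb (x (σ k)))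
    simp only [A]
    linarith
  have hAlim : Tendsto (A xb) atTop (𝓝 0) := by
    rw [Metric.tendsto_atTop]
    intro ε hε
    obtain ⟨k, hk⟩ := (hAσ.eventually (gt_mem_nhds hε)).exists
    refine ⟨σ k, fun n hn => ?_⟩
    have h0 := (sq_nonneg _).trans (hAnn xb hxb n)
    rw [Real.dist_eq, sub_zero, abs_of_nonneg h0]
    exact (hAanti xb hxb hn).trans_lt hk
  have hxlim : Tendsto x atTop (𝓝 xb) := by
    rw [← tendsto_add_atTop_iff_nat 1]
    have := hsq _ (squeeze_zero (fun n => by positivity) (hAnn xb hxb) hAlim)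
    simpa using this.add_const xb
  exact ⟨xb, hxb, hxlim, by simpa using hp.add hxlim⟩
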